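/- Let 𝒞 = {𝓛₁, 𝓛₂} be a pseudo-fibered pair and g ∈ Aut(𝒞). Then for every leaf ℓ of 𝓛₁ or of 𝓛₂, either v(ℓ) ⊆ Fix(g) or v(ℓ) ∩ Fix(g) = ∅. -/

import Mathlib

/-!
If an automorphism `g` fixes one endpoint `o` of a leaf of `𝓛` and moves the other endpoint `b`,
then on the line `S¹ \ {o}` the map `g` is increasing, so `b`, `g b`, `g (g b)` are three distinct
points, each joined to `o` by a leaf.  Three leaves with a common endpoint are impossible
(`no_three`), for the following reasons.

* The endpoint set of a quite full system meets every arc (`dense_coord`): the maximal intervals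
  avoiding an arc free of endpoints would form a gap whose vertex set contains that arc, whereas
  polygons and crowns have countably many vertices.  Maximal intervals exist by closedness
  (`exists_max`).
* The points joined to `o` by a leaf form a relatively closed set, and by transversality and the
  density of the other endpoint set it contains no arc.  Hence between any two leaves ending at `o`
  there are two consecutive ones (`exists_consecutive`).
* Two consecutive leaves ending at `o` bound a non-leaf gap with vertex `o` (`exists_gap`).

Three leaves ending at `o` thus give two distinct non-leaf gaps with the common vertex `o`, which
contradicts looseness.

All arguments are carried out in the coordinate `crd o : S¹ → [0, 1)` based at a point `o`, in
which intervals not containing `o` become real intervals in `[0, 1]`.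
-/

open Set Filter Topology

namespace Veering

/-- The circle `S¹`: the unit additive circle `ℝ / ℤ`, with its standard
circular order (`sbtw x y z` means the triple `(x,y,z)` is counterclockwise)
and its standard topology. -/
abbrev S1 : Type := UnitAddCircle

/-- A good open interval in `S¹`, recorded by its ordered pair of distinct
endpoints; its carrier is the set of points strictly counterclockwise
between them. -/
structure GoodInt : Type where
  a : S1
  b : S1
  ne : a ≠ b

namespace GoodInt

/-- The set of points of the good open interval `(a, b)`. -/
def carrier (I : GoodInt) : Set S1 := {z : S1 | sbtw I.a z I.b}

/-- The dual good interval `(u,v)* = (v,u)`. -/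
def dual (I : GoodInt) : GoodInt := ⟨I.b, I.a, I.ne.symm⟩

/-- The vertex set `v(ℓ(I)) = {a, b}` of the leaf determined by `I`. -/
def verts (I : GoodInt) : Set S1 := {I.a, I.b}

end GoodInt

/-- `I` and `J` represent the same leaf `ℓ(I) = {I, I*}`. -/
def SameLeaf (I J : GoodInt) : Prop := J = I ∨ J = I.dual

/-- A lamination system: a nonempty collection of good open intervals, closed
under duals, pairwise unlinked, and closed under unions of ascending chains
(when these unions are good intervals). -/
structure LamSys : Type where
  mem : Set GoodInt
  nonempty : mem.Nonempty
  dual_mem : ∀ I ∈ mem, GoodInt.dual I ∈ mem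
  unlinked : ∀ I ∈ mem, ∀ J ∈ mem,
      I.carrier ⊆ J.carrier ∨ I.dual.carrier ⊆ J.carrier ∨
      I.carrier ⊆ J.dual.carrier ∨ I.dual.carrier ⊆ J.dual.carrier
  chain_closed : ∀ c : ℕ → GoodInt, (∀ n, c n ∈ mem) →
      (∀ n, (c n).carrier ⊆ (c (n + 1)).carrier) →
      ∀ J : GoodInt, J.carrier = ⋃ n, (c n).carrier → J ∈ mem

namespace LamSys

/-- The endpoint set `E(𝓛)`: the union of the vertex sets of all leaves. -/
def E (L : LamSys) : Set S1 := ⋃ I ∈ L.mem, I.verts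

/-- A gap of `L`: a set of pairwise disjoint elements of `L` such that every
leaf of `L` lies on one of them. -/
def IsGap (L : LamSys) (G : Set GoodInt) : Prop :=
  G ⊆ L.mem ∧
  (∀ I ∈ G, ∀ J ∈ G, I ≠ J → Disjoint I.carrier J.carrier) ∧
  (∀ I ∈ L.mem, ∃ J ∈ G, I.carrier ⊆ J.carrier ∨ I.dual.carrier ⊆ J.carrier)

end LamSys

/-- The vertex set `v(𝒢) = S¹ \ ⋃ 𝒢` of a gap. -/
def gapVerts (G : Set GoodInt) : Set S1 := (⋃ I ∈ G, I.carrier)ᶜ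

/-- `t` is a tip of `G`: an isolated point of the vertex set of `G`. -/
def IsTipOf (t : S1) (G : Set GoodInt) : Prop :=
  t ∈ gapVerts G ∧ t ∉ closure (gapVerts G \ {t})

/-- A gap that is itself a leaf `{I, I*}`. -/
def IsLeafGap (G : Set GoodInt) : Prop := ∃ I : GoodInt, G = {I, I.dual}

/-- `G` is a crown with tip sequence `t : ℤ → S¹` and pivot `p`. -/
def IsCrownWith (G : Set GoodInt) (t : ℤ → S1) (p : S1) : Prop :=
  (∀ k, p ≠ t k) ∧ (∀ k, t k ≠ t (k + 1)) ∧
  G = {I : GoodInt | ∃ k : ℤ, I.a = t k ∧ I.b = t (k + 1)} ∧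
  gapVerts G = Set.range t ∪ {p}

/-- `G` is a crown. -/
def IsCrown (G : Set GoodInt) : Prop := ∃ t p, IsCrownWith G t p

/-- `p` is the pivot of the crown `G`. -/
def IsPivotOf (p : S1) (G : Set GoodInt) : Prop := ∃ t, IsCrownWith G t p

/-- A lamination system is quite full if every gap is an ideal polygon
(finitely many vertices) or a crown. -/
def LamSys.QuiteFull (L : LamSys) : Prop :=
  ∀ G : Set GoodInt, L.IsGap G → (gapVerts G).Finite ∨ IsCrown G

/-- `p` is a rainbow point of `L`: there is a strictly descending sequence of
elements of `L` whose intersection is `{p}`. -/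
def LamSys.IsRainbowPt (L : LamSys) (p : S1) : Prop :=
  ∃ I : ℕ → GoodInt, (∀ n, I n ∈ L.mem) ∧
    (∀ n, (I (n + 1)).carrier ⊂ (I n).carrier) ∧ (⋂ n, (I n).carrier) = {p}

/-- `L` is loose: distinct non-leaf gaps have disjoint vertex sets. -/
def LamSys.Loose (L : LamSys) : Prop :=
  ∀ G H : Set GoodInt, L.IsGap G → L.IsGap H → ¬ IsLeafGap G → ¬ IsLeafGap H →
    G ≠ H → Disjoint (gapVerts G) (gapVerts H)

/-- The sequence of leaves represented by `c` converges to the good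
interval `J`. -/
def SeqConv (c : ℕ → GoodInt) (J : GoodInt) : Prop :=
  ∃ d : ℕ → GoodInt, (∀ n, SameLeaf (c n) (d n)) ∧
    J.carrier ⊆ Filter.liminf (fun n => (d n).carrier) Filter.atTop ∧
    Filter.limsup (fun n => (d n).carrier) Filter.atTop ⊆ closure J.carrier

/-- `I ∈ L` admits an `I`-side sequence: a sequence of leaves of `L`, each
distinct from `ℓ(I)` and lying on `I`, converging to `I`.  (`I` is isolated
precisely when this fails.) -/
def LamSys.HasSideSeq (L : LamSys) (I : GoodInt) : Prop :=
  ∃ c : ℕ → GoodInt, (∀ n, c n ∈ L.mem) ∧ (∀ n, ¬ SameLeaf I (c n)) ∧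
    (∀ n, (c n).carrier ⊆ I.carrier ∨ (c n).dual.carrier ⊆ I.carrier) ∧
    SeqConv c I

/-- `L` is totally disconnected: every distinct pair is separated by a
non-leaf gap. -/
def LamSys.TotDisc (L : LamSys) : Prop :=
  ∀ I ∈ L.mem, ∀ J ∈ L.mem, I.carrier ⊂ J.dual.carrier →
    ∃ G : Set GoodInt, L.IsGap G ∧ ¬ IsLeafGap G ∧
      ∃ M ∈ G, ∃ N ∈ G, I.carrier ⊆ M.carrier ∧ J.carrier ⊆ N.carrier

/-- Gaps `G1` and `G2` interleave: every element of each contains exactly one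
vertex of the other. -/
def Interleave (G1 G2 : Set GoodInt) : Prop :=
  (∀ I ∈ G1, ∃! x : S1, x ∈ I.carrier ∩ gapVerts G2) ∧
  (∀ I ∈ G2, ∃! x : S1, x ∈ I.carrier ∩ gapVerts G1)

/-- A pseudo-fibered pair: two quite full, loose, strongly transverse
lamination systems. -/
structure PseudoFibered (L1 L2 : LamSys) : Prop where
  qf1 : L1.QuiteFull
  qf2 : L2.QuiteFull
  loose1 : L1.Loose
  loose2 : L2.Loose
  transverse : L1.E ∩ L2.E = ∅

/-- A veering pair: a pseudo-fibered pair in which every non-leaf gap of one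
system admits an interleaving gap in the other. -/
structure VeeringPair (L1 L2 : LamSys) extends PseudoFibered L1 L2 : Prop where
  inter1 : ∀ G : Set GoodInt, L1.IsGap G → ¬ IsLeafGap G →
    ∃ H : Set GoodInt, L2.IsGap H ∧ Interleave G H
  inter2 : ∀ G : Set GoodInt, L2.IsGap G → ¬ IsLeafGap G →
    ∃ H : Set GoodInt, L1.IsGap H ∧ Interleave G H

/-- An orientation-preserving homeomorphism of the circle: a bijection of
`S¹` which together with its inverse is continuous, and which preserves the
counterclockwise circular order. -/
def PosHomeo (g : Equiv.Perm S1) : Prop :=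
  Continuous ⇑g ∧ Continuous ⇑g.symm ∧
  ∀ x y z : S1, sbtw x y z → sbtw (g x) (g y) (g z)

/-- `g ∈ Aut(𝓛)`: an orientation-preserving homeomorphism of `S¹` mapping each
element of `𝓛` to an element of `𝓛`. -/
def LamSys.InAut (L : LamSys) (g : Equiv.Perm S1) : Prop :=
  PosHomeo g ∧ ∀ I ∈ L.mem, ∃ J ∈ L.mem, J.carrier = ⇑g '' I.carrier

/-- `g` maps the gap `G` onto itself. -/
def MapsGapOnto (g : Equiv.Perm S1) (G : Set GoodInt) : Prop :=
  (∀ I ∈ G, ∃ J ∈ G, J.carrier = ⇑g '' I.carrier) ∧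
  (∀ J ∈ G, ∃ I ∈ G, J.carrier = ⇑g '' I.carrier)

/-- The fixed point set of `g` on `S¹`. -/
def FixSet (g : Equiv.Perm S1) : Set S1 := {x : S1 | g x = x}

/-- The set of periodic points of `g` on `S¹`. -/
def PerSet (g : Equiv.Perm S1) : Set S1 := {x : S1 | ∃ n : ℕ, 0 < n ∧ (g ^ n) x = x}

/-- `p` is an attracting fixed point of `g`. -/
def IsAttractingFix (g : Equiv.Perm S1) (p : S1) : Prop :=
  g p = p ∧ ∃ I : GoodInt, I.carrier ∩ FixSet g = {p} ∧
    ⇑g '' closure I.carrier ⊆ I.carrier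

/-- `p` is a repelling fixed point of `g`. -/
def IsRepellingFix (g : Equiv.Perm S1) (p : S1) : Prop :=
  g p = p ∧ ∃ I : GoodInt, I.carrier ∩ FixSet g = {p} ∧
    I.carrier ⊆ ⇑g '' closure I.carrier

/-- `g` is elliptic: nontrivial of finite order. -/
def Elliptic (g : Equiv.Perm S1) : Prop := g ≠ 1 ∧ IsOfFinOrder g

/-- `g` is parabolic: it has exactly one fixed point. -/
def Parabolic (g : Equiv.Perm S1) : Prop := ∃! x : S1, g x = x

/-- `g` is hyperbolic: exactly two fixed points, one attracting and one
repelling. -/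
def Hyperbolic (g : Equiv.Perm S1) : Prop :=
  ∃ a b : S1, a ≠ b ∧ FixSet g = {a, b} ∧ IsAttractingFix g a ∧ IsRepellingFix g b

/-- `g` is pseudo-Anosov-like for the pair `(L1, L2)`: nontrivial, neither
elliptic nor parabolic, and preserving both gaps of some interleaving pair. -/
def PAlike (L1 L2 : LamSys) (g : Equiv.Perm S1) : Prop :=
  g ≠ 1 ∧ ¬ Elliptic g ∧ ¬ Parabolic g ∧
  ∃ G1 G2 : Set GoodInt, L1.IsGap G1 ∧ L2.IsGap G2 ∧ Interleave G1 G2 ∧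
    MapsGapOnto g G1 ∧ MapsGapOnto g G2

/-- `g` is properly pseudo-Anosov: pA-like with nonempty fixed point set. -/
def ProperlyPA (L1 L2 : LamSys) (g : Equiv.Perm S1) : Prop :=
  PAlike L1 L2 g ∧ (FixSet g).Nonempty

/-- Two leaves are linked: each of the two complementary components of the
vertex set of one contains a vertex of the other. -/
def LeavesLinked (I J : GoodInt) : Prop :=
  (I.carrier ∩ J.verts).Nonempty ∧ (I.dual.carrier ∩ J.verts).Nonempty

/-- Two gaps are linked: they contain a linked pair of boundary leaves. -/
def GapsLinked (G1 G2 : Set GoodInt) : Prop :=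
  ∃ I1 ∈ G1, ∃ I2 ∈ G2, LeavesLinked I1 I2

/-- Gaps `G1`, `G2` cross: there are distinct pairs `{I₁, J₁} ⊆ G1`,
`{I₂, J₂} ⊆ G2` such that for each `i`, the vertex set of the other gap is
contained in `Iᵢ ∪ Jᵢ` and meets `Iᵢ` in exactly one point. -/
def GapsCross (G1 G2 : Set GoodInt) : Prop :=
  ∃ I1 ∈ G1, ∃ J1 ∈ G1, ∃ I2 ∈ G2, ∃ J2 ∈ G2,
    I1.carrier ⊂ J1.dual.carrier ∧ I2.carrier ⊂ J2.dual.carrier ∧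
    gapVerts G2 ⊆ I1.carrier ∪ J1.carrier ∧
    (∃! x : S1, x ∈ I1.carrier ∩ gapVerts G2) ∧
    gapVerts G1 ⊆ I2.carrier ∪ J2.carrier ∧
    (∃! x : S1, x ∈ I2.carrier ∩ gapVerts G1)

/-- The Baumslag–Solitar group `BS(m,n) = ⟨a, b | b aᵐ b⁻¹ = aⁿ⟩`,
with `a = FreeGroup.of false` and `b = FreeGroup.of true`. -/
abbrev BSGroup (m n : ℤ) : Type :=
  PresentedGroup
    ({FreeGroup.of true * FreeGroup.of false ^ m * (FreeGroup.of true)⁻¹ *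
        (FreeGroup.of false ^ n)⁻¹} : Set (FreeGroup Bool))

/-! ### Coordinates on the circle -/

/-- The point of the circle at counterclockwise distance `t` from the base point `o`. -/
def pt (o : S1) (t : ℝ) : S1 := o + (t : S1)

/-- The coordinate in `[0, 1)` of a point of the circle, as seen from the base point `o`. -/
noncomputable def crd (o z : S1) : ℝ := (AddCircle.equivIco 1 0 (z - o) : ℝ)

lemma crd_nonneg (o z : S1) : 0 ≤ crd o z := (AddCircle.equivIco 1 0 (z - o)).2.1

lemma crd_lt_one (o z : S1) : crd o z < 1 := by
  have h : crd o z < 0 + 1 := (AddCircle.equivIco (1 : ℝ) 0 (z - o)).2.2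
  linarith

lemma pt_crd (o z : S1) : pt o (crd o z) = z := by
  simp [pt, crd, AddCircle.coe_equivIco]

lemma crd_pt (o : S1) {t : ℝ} (h0 : 0 ≤ t) (h1 : t < 1) : crd o (pt o t) = t := by
  have : t ∈ Ico (0 : ℝ) (0 + 1) := ⟨h0, by simpa using h1⟩
  simp only [pt, crd, add_sub_cancel_left]
  exact AddCircle.equivIco_coe_of_mem this

lemma pt_zero (o : S1) : pt o 0 = o := by simp [pt]

lemma pt_one (o : S1) : pt o 1 = o := by
  have : ((1 : ℝ) : S1) = 0 := AddCircle.coe_period 1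
  simp [pt, this]

lemma crd_self (o : S1) : crd o o = 0 := by
  have := crd_pt o (le_refl 0) one_pos
  rwa [pt_zero] at this

lemma crd_inj (o : S1) {z w : S1} (h : crd o z = crd o w) : z = w := by
  rw [← pt_crd o z, h, pt_crd]

lemma toIcoMod_shift {α x z : ℝ} (hx : 0 ≤ x) (hx' : x < 1) (hz : 0 ≤ z) (hz' : z < 1)
    (hp : (0 : ℝ) < 1) :
    toIcoMod hp (α + z) (α + x) = if z ≤ x then α + x else α + x + 1 := by
  rw [toIcoMod_eq_iff]
  split_ifs with h
  · exact ⟨⟨by linarith, by linarith⟩, 0, by simp⟩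
  · exact ⟨⟨by linarith, by linarith⟩, -1, by simp⟩

lemma toIocMod_shift {α x z : ℝ} (hx : 0 ≤ x) (hx' : x < 1) (hz : 0 ≤ z) (hz' : z < 1)
    (hp : (0 : ℝ) < 1) :
    toIocMod hp (α + z) (α + x) = if z < x then α + x else α + x + 1 := by
  rw [toIocMod_eq_iff]
  split_ifs with h
  · exact ⟨⟨by linarith, by linarith⟩, 0, by simp⟩
  · exact ⟨⟨by linarith, by linarith⟩, -1, by simp⟩

lemma sbtw_pt (o : S1) {x y z : ℝ} (hx : 0 ≤ x) (hx' : x < 1) (hy : 0 ≤ y) (hy' : y < 1)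
    (hz : 0 ≤ z) (hz' : z < 1) :
    sbtw (pt o x) (pt o y) (pt o z) ↔ (x < y ∧ y < z) ∨ (y < z ∧ z < x) ∨ (z < x ∧ x < y) := by
  obtain ⟨α, rfl⟩ := QuotientAddGroup.mk_surjective o
  have e : ∀ t : ℝ, pt (QuotientAddGroup.mk α : S1) t
      = ((α + t : ℝ) : ℝ ⧸ AddSubgroup.zmultiples (1 : ℝ)) := fun t => rfl
  rw [sbtw_iff_not_btw, e, e, e]
  have := @QuotientAddGroup.btw_coe_iff ℝ _ _ _ _ 1 _ (α + z) (α + y) (α + x)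
  erw [this]
  rw [toIcoMod_shift hy hy' hz hz', toIocMod_shift hx hx' hz hz']
  split_ifs <;> grind

/-- In the coordinate of any base point, the circular order on the circle is the one induced
by the linear order. -/
lemma sbtw_iff (o x y z : S1) :
    sbtw x y z ↔ (crd o x < crd o y ∧ crd o y < crd o z) ∨
      (crd o y < crd o z ∧ crd o z < crd o x) ∨ (crd o z < crd o x ∧ crd o x < crd o y) := by
  have := sbtw_pt o (crd_nonneg o x) (crd_lt_one o x) (crd_nonneg o y) (crd_lt_one o y)
    (crd_nonneg o z) (crd_lt_one o z)
  simpa only [pt_crd] using this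

/-! ### Intervals and leaves in coordinates -/

/-- `Chord L o x y`: the interval with coordinates `(x, y)` seen from `o` is an element of `L`.
Since `y = 1` is allowed, every interval not containing `o` is of this form; a leaf ending at
`o` is seen both as `(0, y)` and as `(y, 1)`. -/
def Chord (L : LamSys) (o : S1) (x y : ℝ) : Prop :=
  0 ≤ x ∧ x < y ∧ y ≤ 1 ∧ ∃ I ∈ L.mem, I.a = pt o x ∧ I.b = pt o y

lemma mem_carrier {o : S1} {I : GoodInt} {x y : ℝ} (hx : 0 ≤ x) (hxy : x < y) (hy : y ≤ 1)
    (ha : I.a = pt o x) (hb : I.b = pt o y) (z : S1) :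
    z ∈ I.carrier ↔ x < crd o z ∧ crd o z < y := by
  have h0 := crd_nonneg o z
  have h1 := crd_lt_one o z
  change sbtw I.a z I.b ↔ _
  rw [sbtw_iff o, ha, hb, crd_pt o hx (by linarith)]
  rcases hy.lt_or_eq with h | rfl
  · rw [crd_pt o (by linarith) h]
    grind
  · rw [pt_one, crd_self]
    have : x ≠ 0 := by
      rintro rfl
      exact I.ne (by rw [ha, hb, pt_zero, pt_one])
    grind

lemma mem_dual_carrier (I : GoodInt) (z : S1) :
    z ∈ I.dual.carrier ↔ z ∉ I.carrier ∧ z ≠ I.a ∧ z ≠ I.b := by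
  change sbtw I.b z I.a ↔ ¬ sbtw I.a z I.b ∧ _
  rw [sbtw_iff I.a, sbtw_iff I.a I.a, crd_self]
  have h0 := crd_nonneg I.a z
  have h1 := crd_nonneg I.a I.b
  have h2 : crd I.a I.b ≠ 0 := fun h => I.ne (crd_inj I.a (by rw [h, crd_self]))
  have h3 : z = I.a ↔ crd I.a z = 0 := ⟨fun h => by rw [h, crd_self],
    fun h => crd_inj I.a (by rw [h, crd_self])⟩
  have h4 : z = I.b ↔ crd I.a z = crd I.a I.b := ⟨fun h => by rw [h], crd_inj I.a⟩
  rw [Ne, Ne, h3, h4]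
  grind

/-- An interval not containing the base point is seen as an interval in `[0, 1]`. -/
lemma exists_rep {o : S1} {I : GoodInt} (h : o ∉ I.carrier) :
    ∃ x y, 0 ≤ x ∧ x < y ∧ y ≤ 1 ∧ I.a = pt o x ∧ I.b = pt o y := by
  have h' : ¬ sbtw I.a o I.b := h
  rw [sbtw_iff o, crd_self] at h'
  have h0 := crd_nonneg o I.a
  have h1 := crd_nonneg o I.b
  have h2 := crd_lt_one o I.a
  have hne : crd o I.a ≠ crd o I.b := fun h => I.ne (crd_inj o h)
  by_cases hb : crd o I.b = 0
  · refine ⟨crd o I.a, 1, h0, h2, le_rfl, (pt_crd _ _).symm, ?_⟩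
    rw [pt_one, ← pt_crd o I.b, hb, pt_zero]
  · refine ⟨crd o I.a, crd o I.b, h0, ?_, (crd_lt_one _ _).le, (pt_crd _ _).symm,
      (pt_crd _ _).symm⟩
    grind

lemma carrier_subset_iff {o : S1} {I J : GoodInt} {x y x' y' : ℝ}
    (hx : 0 ≤ x) (hxy : x < y) (hy : y ≤ 1) (ha : I.a = pt o x) (hb : I.b = pt o y)
    (hx' : 0 ≤ x') (hxy' : x' < y') (hy' : y' ≤ 1) (ha' : J.a = pt o x') (hb' : J.b = pt o y') :
    I.carrier ⊆ J.carrier ↔ x' ≤ x ∧ y ≤ y' := by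
  rw [← Ioo_subset_Ioo_iff hxy]
  constructor
  · intro h t ht
    have h0 : 0 ≤ t := by linarith [ht.1]
    have h1 : t < 1 := by linarith [ht.2]
    have := (mem_carrier hx' hxy' hy' ha' hb' (pt o t)).1
      (h ((mem_carrier hx hxy hy ha hb (pt o t)).2 (by rw [crd_pt o h0 h1]; exact ht)))
    rwa [crd_pt o h0 h1] at this
  · intro h z hz
    exact (mem_carrier hx' hxy' hy' ha' hb' z).2 (h ((mem_carrier hx hxy hy ha hb z).1 hz))

lemma pt_eq_iff (o z : S1) {t : ℝ} (h0 : 0 ≤ t) (h1 : t < 1) : z = pt o t ↔ crd o z = t :=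
  ⟨fun h => by rw [h, crd_pt o h0 h1], fun h => by rw [← h, pt_crd]⟩

lemma GoodInt.ext' {I J : GoodInt} (ha : I.a = J.a) (hb : I.b = J.b) : I = J := by
  cases I; cases J; simp_all

lemma self_a_notMem (I : GoodInt) : I.a ∉ I.carrier := by
  change ¬ sbtw I.a I.a I.b
  rw [sbtw_iff I.a]; grind

lemma carrier_inj {I J : GoodInt} (h : I.carrier = J.carrier) : I = J := by
  obtain ⟨x, y, hx, hxy, hy, ha, hb⟩ := exists_rep (self_a_notMem I)
  have hJ : I.a ∉ J.carrier := h ▸ self_a_notMem I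
  obtain ⟨x', y', hx', hxy', hy', ha', hb'⟩ := exists_rep hJ
  have h1 := (carrier_subset_iff hx hxy hy ha hb hx' hxy' hy' ha' hb').1 h.subset
  have h2 := (carrier_subset_iff hx' hxy' hy' ha' hb' hx hxy hy ha hb).1 h.symm.subset
  have e1 : x = x' := by linarith [h1.1, h2.1]
  have e2 : y = y' := by linarith [h1.2, h2.2]
  exact GoodInt.ext' (by rw [ha, ha', e1]) (by rw [hb, hb', e2])

lemma Chord.flip_left {L : LamSys} {o : S1} {y : ℝ} (h : Chord L o 0 y) : Chord L o y 1 := by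
  obtain ⟨h0, h1, h2, I, hI, ha, hb⟩ := h
  refine ⟨h1.le, h2.lt_of_ne ?_, le_rfl, I.dual, L.dual_mem I hI, hb, ?_⟩
  · rintro rfl
    exact I.ne (by rw [ha, hb, pt_zero, pt_one])
  · rw [pt_one]; exact ha.trans (pt_zero o)

lemma Chord.flip_right {L : LamSys} {o : S1} {y : ℝ} (h : Chord L o y 1) : Chord L o 0 y := by
  obtain ⟨h0, h1, h2, I, hI, ha, hb⟩ := h
  refine ⟨le_rfl, h0.lt_of_ne ?_, h1.le, I.dual, L.dual_mem I hI, ?_, ha⟩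
  · rintro rfl
    exact I.ne (by rw [ha, hb, pt_zero, pt_one])
  · rw [pt_zero]; exact hb.trans (pt_one o)

/-- Unlinkedness in coordinates.  The last two alternatives record the two leaves sharing the
endpoint `o` that are seen as overlapping intervals. -/
lemma Chord.unlinked {L : LamSys} {o : S1} {x y x' y' : ℝ} (h : Chord L o x y)
    (h' : Chord L o x' y') :
    y ≤ x' ∨ y' ≤ x ∨ (x ≤ x' ∧ y' ≤ y) ∨ (x' ≤ x ∧ y ≤ y') ∨ (x = 0 ∧ y' = 1) ∨
      (x' = 0 ∧ y = 1) := by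
  obtain ⟨hx, hxy, hy, I, hI, ha, hb⟩ := h
  obtain ⟨hx', hxy', hy', J, hJ, ha', hb'⟩ := h'
  by_contra! hcon
  obtain ⟨c1, c2, c3, c4, c5, c6⟩ := hcon
  have key : ∀ t, 0 ≤ t → t < 1 → (pt o t ∈ I.carrier ↔ x < t ∧ t < y) ∧
      (pt o t ∈ J.carrier ↔ x' < t ∧ t < y') := fun t h0 h1 => by
    rw [mem_carrier hx hxy hy ha hb, mem_carrier hx' hxy' hy' ha' hb', crd_pt o h0 h1]
    exact ⟨Iff.rfl, Iff.rfl⟩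
  have hab : ¬ (x = 0 ∧ y = 1) := by
    rintro ⟨rfl, rfl⟩
    exact I.ne (by rw [ha, hb, pt_zero, pt_one])
  have out : ∀ t, 0 < t → t < 1 → (t < x ∨ y < t) → pt o t ∈ I.dual.carrier := by
    intro t h0 h1 ht
    rw [mem_dual_carrier, (key t h0.le h1).1, ha, hb]
    refine ⟨by grind, fun h => ?_, fun h => ?_⟩
    · rw [pt_eq_iff o _ hx (by linarith), crd_pt o h0.le h1] at h
      grind
    · rcases hy.lt_or_eq with hy1 | rfl
      · rw [pt_eq_iff o _ (by linarith) hy1, crd_pt o h0.le h1] at h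
        grind
      · rw [(pt_one o).trans (pt_zero o).symm, pt_eq_iff o _ le_rfl one_pos, crd_pt o h0.le h1] at h
        grind
  rcases L.unlinked I hI J hJ with h | h | h | h
  · rw [carrier_subset_iff hx hxy hy ha hb hx' hxy' hy' ha' hb'] at h
    grind
  · -- the dual of `I` contains points near `o` on at least one side
    have out' : ∀ t, 0 < t → t < 1 → (t < x ∨ y < t) → x' < t ∧ t < y' := fun t h0 h1 ht =>
      (key t h0.le h1).2.1 (h (out t h0 h1 ht))
    rcases hx.eq_or_lt with h0 | h0
    · have hy1 : y < 1 := hy.lt_of_ne fun e => hab ⟨h0.symm, e⟩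
      have hy2 : y' < 1 := hy'.lt_of_ne fun e => c5 h0.symm e
      have m1 := le_max_left y y'
      have m2 := le_max_right y y'
      have m3 : max y y' < 1 := max_lt hy1 hy2
      have := (out' ((max y y' + 1) / 2) (by linarith) (by linarith) (Or.inr (by linarith))).2
      linarith
    · by_cases h1 : x' = 0
      · -- `o` itself lies in the dual of `I` unless `y = 1`
        have hy1 : y < 1 := hy.lt_of_ne fun e => c6 h1 e
        have : pt o 0 ∈ I.dual.carrier := by
          rw [mem_dual_carrier, (key 0 le_rfl one_pos).1, ha, hb]
          refine ⟨by grind, fun h => ?_, fun h => ?_⟩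
          · rw [pt_eq_iff o _ hx (by linarith), crd_pt o le_rfl one_pos] at h
            grind
          · rw [pt_eq_iff o _ (by linarith) hy1, crd_pt o le_rfl one_pos] at h
            grind
        have := (key 0 le_rfl one_pos).2.1 (h this)
        linarith [this.1]
      · have h2 : 0 < x' := hx'.lt_of_ne (Ne.symm h1)
        have m1 := min_le_left x x'
        have m2 := min_le_right x x'
        have m3 : 0 < min x x' := lt_min h0 h2
        have := (out' (min x x' / 2) (by linarith) (by linarith) (Or.inl (by linarith))).1
        linarith
  · -- the two intervals are disjoint
    have : max x x' < min y y' := by grind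
    obtain ⟨t, ht1, ht2⟩ := exists_between this
    rw [max_lt_iff] at ht1
    rw [lt_min_iff] at ht2
    have h0 : 0 ≤ t := by linarith [ht1.1]
    have h1 : t < 1 := by linarith [ht2.1]
    exact ((mem_dual_carrier J _).1 (h ((key t h0 h1).1.2 ⟨ht1.1, ht2.1⟩))).1
      ((key t h0 h1).2.2 ⟨ht1.2, ht2.2⟩)
  · have sub : ∀ t, x' < t → t < y' → x ≤ t ∧ t ≤ y := by
      intro t h0 h1
      by_contra hc
      have hc' : t < x ∨ y < t := by
        by_contra! hd
        exact hc hd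
      exact ((mem_dual_carrier J _).1 (h (out t (by linarith) (by linarith) hc'))).1
        ((key t (by linarith) (by linarith)).2.2 ⟨h0, h1⟩)
    have e1 : x ≤ x' := by
      by_contra! hc
      obtain ⟨t, ht1, ht2⟩ := exists_between (lt_min hc hxy')
      rw [lt_min_iff] at ht2
      linarith [(sub t ht1 ht2.2).1]
    have e2 : y' ≤ y := by
      by_contra! hc
      obtain ⟨t, ht1, ht2⟩ := exists_between (max_lt hc hxy')
      rw [max_lt_iff] at ht1
      linarith [(sub t ht1.2 ht2).2]
    linarith [c3 e1]

/-- Closedness in coordinates: the limit of an increasing sequence of intervals. -/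
lemma Chord.lim {L : LamSys} {o : S1} {x y : ℕ → ℝ} (h : ∀ n, Chord L o (x n) (y n))
    (hx : Antitone x) (hy : Monotone y) {X Y : ℝ} (hX : IsGLB (range x) X)
    (hY : IsLUB (range y) Y) (hlt : Y - X < 1) : Chord L o X Y := by
  have hX0 : 0 ≤ X := hX.2 (by rintro _ ⟨n, rfl⟩; exact (h n).1)
  have hY1 : Y ≤ 1 := hY.2 (by rintro _ ⟨n, rfl⟩; exact (h n).2.2.1)
  have hXn : ∀ n, X ≤ x n := fun n => hX.1 ⟨n, rfl⟩
  have hYn : ∀ n, y n ≤ Y := fun n => hY.1 ⟨n, rfl⟩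
  have hXY : X < Y := by linarith [hXn 0, hYn 0, (h 0).2.1]
  choose h0 h1 h2 c hc ha hb using h
  have hne : pt o X ≠ pt o Y := by
    intro e
    rcases hY1.lt_or_eq with h | rfl
    · rw [pt_eq_iff o _ (by linarith) h, crd_pt o hX0 (by linarith)] at e
      linarith
    · rw [(pt_one o).trans (pt_zero o).symm, pt_eq_iff o _ le_rfl one_pos, crd_pt o hX0 (by linarith)] at e
      linarith
  refine ⟨hX0, hXY, hY1, ⟨pt o X, pt o Y, hne⟩, ?_, rfl, rfl⟩
  refine L.chain_closed c hc (fun n => ?_) _ ?_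
  · rw [carrier_subset_iff (h0 n) (h1 n) (h2 n) (ha n) (hb n) (h0 _) (h1 _) (h2 _) (ha _) (hb _)]
    exact ⟨hx n.le_succ, hy n.le_succ⟩
  · ext z
    rw [mem_carrier (o := o) hX0 hXY hY1 rfl rfl, mem_iUnion]
    constructor
    · rintro ⟨hz1, hz2⟩
      obtain ⟨_, ⟨n, rfl⟩, hn⟩ := (isGLB_lt_iff hX).1 hz1
      obtain ⟨_, ⟨m, rfl⟩, hm⟩ := (lt_isLUB_iff hY).1 hz2
      refine ⟨max n m, (mem_carrier (h0 _) (h1 _) (h2 _) (ha _) (hb _) z).2 ⟨?_, ?_⟩⟩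
      · exact (hx (le_max_left n m)).trans_lt hn
      · exact hm.trans_le (hy (le_max_right n m))
    · rintro ⟨n, hn⟩
      rw [mem_carrier (h0 _) (h1 _) (h2 _) (ha _) (hb _) z] at hn
      exact ⟨(hXn n).trans_lt hn.1, hn.2.trans_le (hYn n)⟩

/-! ### Maximal intervals -/

/-- `(X, Y)` is maximal among the intervals of `L` contained in `(γ, δ)`. -/
def MaxIn (L : LamSys) (o : S1) (γ δ X Y : ℝ) : Prop :=
  γ ≤ X ∧ Y ≤ δ ∧ Chord L o X Y ∧
    ∀ x y, Chord L o x y → γ ≤ x → y ≤ δ → x ≤ X → Y ≤ y → x = X ∧ y = Y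

/-- Two intervals in `[γ, δ] ≠ [0, 1]` are nested or disjoint. -/
lemma Chord.nested {L : LamSys} {o : S1} {γ δ x y x' y' : ℝ} (hγδ : δ - γ < 1)
    (h : Chord L o x y) (h' : Chord L o x' y') (hx : γ ≤ x) (hy : y ≤ δ)
    (hx' : γ ≤ x') (hy' : y' ≤ δ) :
    y ≤ x' ∨ y' ≤ x ∨ (x ≤ x' ∧ y' ≤ y) ∨ (x' ≤ x ∧ y ≤ y') := by
  rcases h.unlinked h' with h | h | h | h | ⟨h1, h2⟩ | ⟨h1, h2⟩
  · exact Or.inl h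
  · exact Or.inr (Or.inl h)
  · exact Or.inr (Or.inr (Or.inl h))
  · exact Or.inr (Or.inr (Or.inr h))
  · exfalso; linarith
  · exfalso; linarith

lemma exists_max {L : LamSys} {o : S1} {γ δ x y : ℝ} (hγδ : δ - γ < 1) (h : Chord L o x y)
    (hx : γ ≤ x) (hy : y ≤ δ) : ∃ X Y, MaxIn L o γ δ X Y ∧ X ≤ x ∧ y ≤ Y := by
  -- the intervals between `(x, y)` and `(γ, δ)` form a chain: maximize the length
  let S : Set ℝ := {l | ∃ X Y, Chord L o X Y ∧ γ ≤ X ∧ Y ≤ δ ∧ X ≤ x ∧ y ≤ Y ∧ l = Y - X}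
  have hS : S.Nonempty := ⟨_, x, y, h, hx, hy, le_rfl, le_rfl, rfl⟩
  have hS' : BddAbove S := by
    refine ⟨δ - γ, ?_⟩
    rintro _ ⟨X, Y, -, h1, h2, -, -, rfl⟩
    linarith
  obtain ⟨u, hu, hlim, huS⟩ := exists_seq_tendsto_sSup hS hS'
  choose X Y hC hX hY hXx hYy huXY using huS
  have hmono : ∀ n m, n ≤ m → X m ≤ X n ∧ Y n ≤ Y m := by
    intro n m hnm
    have := hu hnm
    rw [huXY, huXY] at this
    have hxy := h.2.1
    rcases (hC n).nested hγδ (hC m) (hX n) (hY n) (hX m) (hY m) with h | h | h | h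
    · linarith [hXx m, hYy n]
    · linarith [hXx n, hYy m]
    · constructor <;> linarith [h.1, h.2]
    · exact h
  have hbX : BddBelow (range X) := ⟨γ, by rintro _ ⟨n, rfl⟩; exact hX n⟩
  have hbY : BddAbove (range Y) := ⟨δ, by rintro _ ⟨n, rfl⟩; exact hY n⟩
  have hGX := isGLB_ciInf hbX
  have hGY := isLUB_ciSup hbY
  have g1 : γ ≤ ⨅ n, X n := le_ciInf hX
  have g2 : ⨆ n, Y n ≤ δ := ciSup_le hY
  have l1 : ∀ n, ⨅ n, X n ≤ X n := fun n => ciInf_le hbX n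
  have l2 : ∀ n, Y n ≤ ⨆ n, Y n := fun n => le_ciSup hbY n
  have hsup : sSup S ≤ (⨆ n, Y n) - ⨅ n, X n :=
    le_of_tendsto' hlim fun n => by rw [huXY]; linarith [l1 n, l2 n]
  refine ⟨⨅ n, X n, ⨆ n, Y n, ⟨g1, g2, ?_, ?_⟩, (l1 0).trans (hXx 0), (hYy 0).trans (l2 0)⟩
  · exact Chord.lim hC (fun n m hnm => (hmono n m hnm).1) (fun n m hnm => (hmono n m hnm).2)
      hGX hGY (by linarith)
  · intro x' y' hc h1 h2 h3 h4
    have : y' - x' ≤ sSup S := le_csSup hS'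
      ⟨x', y', hc, h1, h2, h3.trans ((l1 0).trans (hXx 0)), ((hYy 0).trans (l2 0)).trans h4, rfl⟩
    constructor <;> linarith

lemma MaxIn.disj {L : LamSys} {o : S1} {γ δ X Y X' Y' : ℝ} (hγδ : δ - γ < 1)
    (h : MaxIn L o γ δ X Y) (h' : MaxIn L o γ δ X' Y') :
    (X = X' ∧ Y = Y') ∨ Y ≤ X' ∨ Y' ≤ X := by
  obtain ⟨h1, h2, h3, h4⟩ := h
  obtain ⟨h1', h2', h3', h4'⟩ := h'
  rcases h3.nested hγδ h3' h1 h2 h1' h2' with h | h | h | h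
  · exact Or.inr (Or.inl h)
  · exact Or.inr (Or.inr h)
  · exact Or.inl (h4' X Y h3 h1 h2 h.1 h.2)
  · obtain ⟨e1, e2⟩ := h4 X' Y' h3' h1' h2' h.1 h.2
    exact Or.inl ⟨e1.symm, e2.symm⟩

/-! ### Gaps in coordinates and density of endpoints -/

/-- The set of intervals whose coordinates seen from `o` satisfy `Q`. -/
def ofCoords (o : S1) (Q : ℝ → ℝ → Prop) : Set GoodInt :=
  {I | ∃ X Y, Q X Y ∧ I.a = pt o X ∧ I.b = pt o Y}

/-- Criterion for a gap in coordinates; the last two alternatives of `hcov` say that the leaf,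
which ends at `o`, lies on the given interval through its dual. -/
lemma isGap_ofCoords {L : LamSys} {o : S1} {Q : ℝ → ℝ → Prop}
    (hQ : ∀ X Y, Q X Y → Chord L o X Y)
    (hdisj : ∀ X Y X' Y', Q X Y → Q X' Y' → (X = X' ∧ Y = Y') ∨ Y ≤ X' ∨ Y' ≤ X)
    (hcov : ∀ x y, Chord L o x y → ∃ X Y, Q X Y ∧
      ((X ≤ x ∧ y ≤ Y) ∨ (x = 0 ∧ X ≤ y ∧ Y = 1) ∨ (y = 1 ∧ X = 0 ∧ x ≤ Y))) :
    L.IsGap (ofCoords o Q) := by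
  refine ⟨?_, ?_, ?_⟩
  · rintro I ⟨X, Y, hXY, ha, hb⟩
    obtain ⟨-, -, -, J, hJ, ha', hb'⟩ := hQ X Y hXY
    rwa [GoodInt.ext' (ha.trans ha'.symm) (hb.trans hb'.symm)]
  · rintro I ⟨X, Y, hXY, ha, hb⟩ J ⟨X', Y', hXY', ha', hb'⟩ hne
    obtain ⟨h0, h1, h2, -⟩ := hQ X Y hXY
    obtain ⟨h0', h1', h2', -⟩ := hQ X' Y' hXY'
    rw [Set.disjoint_left]
    intro z hz hz'
    rw [mem_carrier h0 h1 h2 ha hb] at hz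
    rw [mem_carrier h0' h1' h2' ha' hb'] at hz'
    rcases hdisj _ _ _ _ hXY hXY' with ⟨rfl, rfl⟩ | h | h
    · exact hne (GoodInt.ext' (ha.trans ha'.symm) (hb.trans hb'.symm))
    · linarith [hz.1, hz.2, hz'.1, hz'.2]
    · linarith [hz.1, hz.2, hz'.1, hz'.2]
  · have main : ∀ I ∈ L.mem, o ∉ I.carrier →
        ∃ J ∈ ofCoords o Q, I.carrier ⊆ J.carrier ∨ I.dual.carrier ⊆ J.carrier := by
      intro I hI ho
      obtain ⟨x, y, h0, h1, h2, ha, hb⟩ := exists_rep ho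
      have hc : Chord L o x y := ⟨h0, h1, h2, I, hI, ha, hb⟩
      obtain ⟨X, Y, hXY, h⟩ := hcov x y hc
      obtain ⟨k0, k1, k2, J, hJ, ha', hb'⟩ := hQ X Y hXY
      refine ⟨J, ⟨X, Y, hXY, ha', hb'⟩, ?_⟩
      rcases h with h | ⟨rfl, h3, rfl⟩ | ⟨rfl, rfl, h3⟩
      · exact Or.inl ((carrier_subset_iff h0 h1 h2 ha hb k0 k1 k2 ha' hb').2 h)
      · have hf := hc.flip_left
        refine Or.inr ((carrier_subset_iff (I := I.dual) hf.1 hf.2.1 hf.2.2.1 hb ?_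
          k0 k1 k2 ha' hb').2 ⟨h3, le_rfl⟩)
        rw [pt_one]; exact ha.trans (pt_zero o)
      · have hf := hc.flip_right
        refine Or.inr ((carrier_subset_iff (I := I.dual) hf.1 hf.2.1 hf.2.2.1 ?_ ha
          k0 k1 k2 ha' hb').2 ⟨le_rfl, h3⟩)
        rw [pt_zero]; exact hb.trans (pt_one o)
    intro I hI
    by_cases ho : o ∈ I.carrier
    · have : o ∉ I.dual.carrier := fun h => ((mem_dual_carrier I o).1 h).1 ho
      obtain ⟨J, hJ, h⟩ := main I.dual (L.dual_mem I hI) this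
      exact ⟨J, hJ, h.symm⟩
    · exact main I hI ho

/-- Endpoints of a quite full lamination system are dense: otherwise the maximal intervals
avoiding an arc disjoint from `E(L)` would form a gap with uncountably many vertices. -/
lemma dense_coord {L : LamSys} (hq : L.QuiteFull) (o : S1) {w : ℝ} (h0 : 0 < w) (h1 : w < 1) :
    ∃ z ∈ L.E, 0 < crd o z ∧ crd o z < w := by
  by_contra! hcon
  have hE : ∀ x y, Chord L o x y → (x = 0 ∨ w ≤ x) ∧ (w ≤ y) := by
    rintro x y ⟨k0, k1, k2, I, hI, ha, hb⟩
    have hEa : I.a ∈ L.E := mem_biUnion hI (Or.inl rfl)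
    have hEb : I.b ∈ L.E := mem_biUnion hI (Or.inr rfl)
    have c1 := hcon _ hEa
    rw [ha, crd_pt o k0 (by linarith)] at c1
    constructor
    · rcases k0.eq_or_lt with h | h
      · exact Or.inl h.symm
      · exact Or.inr (c1 h)
    · rcases k2.lt_or_eq with h | rfl
      · have c2 := hcon _ hEb
        rw [hb, crd_pt o (by linarith) h] at c2
        exact c2 (by linarith)
      · exact h1.le
  have hw : 1 - w < 1 := by linarith
  have hgap : L.IsGap (ofCoords o (MaxIn L o w 1)) := by
    refine isGap_ofCoords (fun X Y h => h.2.2.1) (fun X Y X' Y' h h' => h.disj hw h') ?_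
    intro x y hc
    rcases (hE x y hc).1 with rfl | hx
    · obtain ⟨X, Y, hM, h2, h3⟩ := exists_max hw hc.flip_left (hE 0 y hc).2 le_rfl
      exact ⟨X, Y, hM, Or.inr (Or.inl ⟨rfl, h2, le_antisymm hM.2.1 h3⟩)⟩
    · obtain ⟨X, Y, hM, h2, h3⟩ := exists_max hw hc hx hc.2.2.1
      exact ⟨X, Y, hM, Or.inl ⟨h2, h3⟩⟩
  have hsub : pt o '' Ioo 0 w ⊆ gapVerts (ofCoords o (MaxIn L o w 1)) := by
    rintro _ ⟨t, ⟨ht0, ht1⟩, rfl⟩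
    simp only [gapVerts, mem_compl_iff, mem_iUnion, not_exists]
    rintro I ⟨X, Y, hM, ha, hb⟩ hz
    obtain ⟨k0, k1, k2, -⟩ := hM.2.2.1
    rw [mem_carrier k0 k1 k2 ha hb, crd_pt o ht0.le (by linarith)] at hz
    linarith [hM.1, hz.1]
  have hcount : (gapVerts (ofCoords o (MaxIn L o w 1))).Countable := by
    rcases hq _ hgap with h | ⟨t, p, -, -, -, h⟩
    · exact h.countable
    · rw [h]
      exact (countable_range t).union (countable_singleton p)
  have hinj : InjOn (pt o) (Ioo 0 w) := by
    intro s hs t ht e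
    have := congrArg (crd o) e
    rwa [crd_pt o hs.1.le (by linarith [hs.2]), crd_pt o ht.1.le (by linarith [ht.2])] at this
  have := countable_of_injective_of_countable_image hinj (hcount.mono hsub)
  rw [← Cardinal.le_aleph0_iff_set_countable, Cardinal.mk_Ioo_real h0] at this
  exact absurd Cardinal.aleph0_lt_continuum this.not_gt

/-! ### Leaves sharing an endpoint -/

/-- Two consecutive leaves `(0, γ)`, `(0, δ)` ending at `o` bound a non-leaf gap having `o` as a
vertex: it consists of the two outer intervals and the maximal intervals in `(γ, δ)`. -/
lemma exists_gap {L : LamSys} {o : S1} {γ δ : ℝ} (hγδ : γ < δ) (hγ : Chord L o 0 γ)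
    (hδ : Chord L o 0 δ) (hno : ∀ e, γ < e → e < δ → ¬ Chord L o 0 e) :
    ∃ G, L.IsGap G ∧ ¬ IsLeafGap G ∧ o ∈ gapVerts G ∧
      ∃ A ∈ G, A.a = pt o 0 ∧ A.b = pt o γ := by
  have hγ0 : 0 < γ := hγ.2.1
  have hδf := hδ.flip_left
  have hδ1 : δ < 1 := hδf.2.1
  have hlen : δ - γ < 1 := by linarith
  let Q : ℝ → ℝ → Prop := fun X Y => (X = 0 ∧ Y = γ) ∨ (X = δ ∧ Y = 1) ∨ MaxIn L o γ δ X Y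
  have hQ : ∀ X Y, Q X Y → Chord L o X Y := by
    rintro X Y (⟨rfl, rfl⟩ | ⟨rfl, rfl⟩ | h)
    · exact hγ
    · exact hδf
    · exact h.2.2.1
  have hgap : L.IsGap (ofCoords o Q) := by
    refine isGap_ofCoords hQ ?_ ?_
    · rintro X Y X' Y' (⟨rfl, rfl⟩ | ⟨rfl, rfl⟩ | h) (⟨rfl, rfl⟩ | ⟨rfl, rfl⟩ | h')
      · exact Or.inl ⟨rfl, rfl⟩
      · exact Or.inr (Or.inl hγδ.le)
      · exact Or.inr (Or.inl h'.1)
      · exact Or.inr (Or.inr hγδ.le)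
      · exact Or.inl ⟨rfl, rfl⟩
      · exact Or.inr (Or.inr h'.2.1)
      · exact Or.inr (Or.inr h.1)
      · exact Or.inr (Or.inl h.2.1)
      · exact h.disj hlen h'
    · -- a leaf ending at `o` does not enter `(γ, δ)`
      have hend : ∀ e, Chord L o 0 e → e ≤ γ ∨ δ ≤ e := by
        intro e he
        by_contra! hc
        exact hno e hc.1 hc.2 he
      have Q1 : Q 0 γ := Or.inl ⟨rfl, rfl⟩
      have Q2 : Q δ 1 := Or.inr (Or.inl ⟨rfl, rfl⟩)
      intro x y hc
      obtain ⟨hx0, hxy, hy1, -⟩ := id hc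
      by_cases hx : x = 0
      · subst hx
        rcases hend y hc with h | h
        · exact ⟨0, γ, Q1, Or.inl ⟨le_rfl, h⟩⟩
        · exact ⟨δ, 1, Q2, Or.inr (Or.inl ⟨rfl, h, rfl⟩)⟩
      by_cases hy : y = 1
      · subst hy
        rcases hend x hc.flip_right with h | h
        · exact ⟨0, γ, Q1, Or.inr (Or.inr ⟨rfl, rfl, h⟩)⟩
        · exact ⟨δ, 1, Q2, Or.inl ⟨h, le_rfl⟩⟩
      have hx0' : 0 < x := hx0.lt_of_ne (Ne.symm hx)
      have hy1' : y < 1 := hy1.lt_of_ne hy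
      by_cases hyγ : y ≤ γ
      · exact ⟨0, γ, Q1, Or.inl ⟨hx0, hyγ⟩⟩
      by_cases hxδ : δ ≤ x
      · exact ⟨δ, 1, Q2, Or.inl ⟨hxδ, hy1⟩⟩
      have hxγ : γ ≤ x := by
        have := hc.unlinked hγ
        grind
      have hyδ : y ≤ δ := by
        have := hc.unlinked hδf
        grind
      obtain ⟨X, Y, hM, h2, h3⟩ := exists_max hlen hc hxγ hyδ
      exact ⟨X, Y, Or.inr (Or.inr hM), Or.inl ⟨h2, h3⟩⟩
  obtain ⟨-, -, -, A, -, hAa, hAb⟩ := id hγ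
  obtain ⟨-, -, -, B, -, hBa, hBb⟩ := id hδf
  have hA : A ∈ ofCoords o Q := ⟨0, γ, Or.inl ⟨rfl, rfl⟩, hAa, hAb⟩
  have hB : B ∈ ofCoords o Q := ⟨δ, 1, Or.inr (Or.inl ⟨rfl, rfl⟩), hBa, hBb⟩
  have hne : pt o γ ≠ pt o δ := by
    intro h
    rw [pt_eq_iff o _ (by linarith) hδ1, crd_pt o hγ0.le (by linarith)] at h
    linarith
  have hne' : pt o 0 ≠ pt o δ := by
    intro h
    rw [pt_eq_iff o _ (by linarith) hδ1, crd_pt o le_rfl one_pos] at h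
    linarith
  refine ⟨_, hgap, ?_, ?_, A, hA, hAa, hAb⟩
  · rintro ⟨I, hI⟩
    rw [hI] at hA hB
    -- otherwise `B` would be `A` or its dual, but it starts at neither endpoint of `A`
    have : B.a = A.a ∨ B.a = A.b := by
      rcases hA with rfl | rfl <;> rcases hB with rfl | rfl
      · exact Or.inl rfl
      · exact Or.inr rfl
      · exact Or.inr rfl
      · exact Or.inl rfl
    rw [hAa, hAb, hBa] at this
    rcases this with h | h
    · exact hne' h.symm
    · exact hne h.symm
  · simp only [gapVerts, mem_compl_iff, mem_iUnion, not_exists]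
    rintro I ⟨X, Y, hXY, ha, hb⟩ hz
    obtain ⟨k0, k1, k2, -⟩ := hQ X Y hXY
    rw [mem_carrier k0 k1 k2 ha hb, crd_self] at hz
    linarith [hz.1]

/-- Between two leaves ending at `o` there are two consecutive ones: otherwise the other endpoints
would fill an arc, which must contain an endpoint of the transverse system `M`. -/
lemma exists_consecutive {L M : LamSys} (hq : M.QuiteFull) (htr : ∀ z ∈ L.E, z ∉ M.E) {o : S1}
    {α β : ℝ} (hαβ : α < β) (hα : Chord L o 0 α) (hβ : Chord L o 0 β) :
    ∃ γ δ, α ≤ γ ∧ γ < δ ∧ δ ≤ β ∧ Chord L o 0 γ ∧ Chord L o 0 δ ∧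
      ∀ e, γ < e → e < δ → ¬ Chord L o 0 e := by
  have hα0 : 0 < α := hα.2.1
  have hβ1 : β < 1 := hβ.flip_left.2.1
  obtain ⟨z, hzM, hαz, hzβ⟩ : ∃ z ∈ M.E, α < crd o z ∧ crd o z < β := by
    have hα1 : α < 1 := by linarith
    have hne : crd (pt o α) (pt o β) ≠ 0 := by
      intro h
      rw [← pt_eq_iff (pt o α) _ le_rfl one_pos, pt_zero, pt_eq_iff o _ hα0.le hα1,
        crd_pt o (by linarith) hβ1] at h
      linarith
    obtain ⟨z, hz, h1, h2⟩ := dense_coord hq (pt o α)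
      ((crd_nonneg (pt o α) (pt o β)).lt_of_ne hne.symm) (crd_lt_one _ _)
    have hs : sbtw (pt o α) z (pt o β) := by
      rw [sbtw_iff (pt o α), crd_self]
      exact Or.inl ⟨h1, h2⟩
    rw [sbtw_iff o, crd_pt o hα0.le hα1, crd_pt o (by linarith) hβ1] at hs
    refine ⟨z, hz, ?_⟩
    grind
  set e := crd o z with he
  have hnoe : ¬ Chord L o 0 e := by
    rintro ⟨-, -, -, I, hI, -, hb⟩
    refine htr z ?_ hzM
    rw [← pt_crd o z, ← he, ← hb]
    exact mem_biUnion hI (Or.inr rfl)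
  -- the nearest leaves on both sides of `e`
  let S : Set ℝ := {t | t ≤ e ∧ Chord L o 0 t}
  let T : Set ℝ := {t | e ≤ t ∧ Chord L o 0 t}
  have hαS : α ∈ S := ⟨hαz.le, hα⟩
  have hβT : β ∈ T := ⟨hzβ.le, hβ⟩
  have hSb : BddAbove S := ⟨e, fun t ht => ht.1⟩
  have hTb : BddBelow T := ⟨e, fun t ht => ht.1⟩
  have hS : IsLUB S (sSup S) := isLUB_csSup ⟨α, hαS⟩ hSb
  have hT : IsGLB T (sInf T) := isGLB_csInf ⟨β, hβT⟩ hTb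
  have hSe : sSup S ≤ e := csSup_le ⟨α, hαS⟩ fun t ht => ht.1
  have hTe : e ≤ sInf T := le_csInf ⟨β, hβT⟩ fun t ht => ht.1
  have hSc : Chord L o 0 (sSup S) := by
    obtain ⟨u, hu, hlim, huS⟩ := exists_seq_tendsto_sSup ⟨α, hαS⟩ hSb
    refine Chord.lim (x := fun _ => 0) (fun n => (huS n).2) antitone_const hu ?_
      (isLUB_of_tendsto_atTop hu hlim) (by linarith)
    rw [range_const]
    exact isGLB_singleton
  have hTc : Chord L o 0 (sInf T) := by
    obtain ⟨u, hu, hlim, huT⟩ := exists_seq_tendsto_sInf ⟨β, hβT⟩ hTb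
    refine Chord.flip_right (Chord.lim (y := fun _ => 1) (fun n => (huT n).2.flip_left) hu
      monotone_const (isGLB_of_tendsto_atTop hu hlim) ?_ (by linarith))
    rw [range_const]
    exact isLUB_singleton
  have hSe' : sSup S < e := hSe.lt_of_ne fun h => hnoe (h ▸ hSc)
  refine ⟨sSup S, sInf T, hS.1 hαS, hSe'.trans_le hTe, hT.1 hβT, hSc, hTc, ?_⟩
  intro t h1 h2 ht
  rcases le_total t e with h | h
  · exact h1.not_ge (hS.1 ⟨h, ht⟩)
  · exact h2.not_ge (hT.1 ⟨h, ht⟩)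

/-- No three leaves share an endpoint: they would yield two distinct non-leaf gaps with a common
vertex, against looseness. -/
lemma no_three {L M : LamSys} (hq : M.QuiteFull) (hl : L.Loose) (htr : ∀ z ∈ L.E, z ∉ M.E)
    {o : S1} {α β γ : ℝ} (hαβ : α < β) (hβγ : β < γ) (hα : Chord L o 0 α) (hβ : Chord L o 0 β)
    (hγ : Chord L o 0 γ) : False := by
  obtain ⟨p, q, h1, h2, h3, hp, hq', hno⟩ := exists_consecutive hq htr hαβ hα hβ
  obtain ⟨p', q', h1', h2', h3', hp', hq'', hno'⟩ := exists_consecutive hq htr hβγ hβ hγ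
  obtain ⟨G, hG, hGl, hoG, A, hA, hAa, hAb⟩ := exists_gap h2 hp hq' hno
  obtain ⟨H, hH, hHl, hoH, B, hB, hBa, hBb⟩ := exists_gap h2' hp' hq'' hno'
  have hp0 : 0 < p := hp.2.1
  have hp1 : p ≤ 1 := hp.2.2.1
  have hp1' : p' ≤ 1 := hp'.2.2.1
  refine Set.disjoint_left.1 (hl G H hG hH hGl hHl ?_) hoG hoH
  rintro rfl
  -- `A = (0, p)` and `B = (0, p')` are distinct and overlap
  have hm : pt o (p / 2) ∈ A.carrier ∧ pt o (p / 2) ∈ B.carrier := by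
    rw [mem_carrier le_rfl hp0 hp1 hAa hAb, mem_carrier le_rfl hp'.2.1 hp1' hBa hBb,
      crd_pt o (by linarith) (by linarith)]
    constructor <;> constructor <;> linarith
  refine Set.disjoint_left.1 (hG.2.1 A hA B hB ?_) hm.1 hm.2
  rintro rfl
  have := (carrier_subset_iff le_rfl hp'.2.1 hp1' hBa hBb le_rfl hp0 hp1 hAa hAb).1 subset_rfl
  linarith [this.2]

/-! ### Automorphisms -/

/-- The image of an interval under an automorphism is the interval between the images of its
endpoints. -/
lemma image_mem {L : LamSys} {g : Equiv.Perm S1} (hg : L.InAut g) {I : GoodInt}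
    (hI : I ∈ L.mem) : ∃ J ∈ L.mem, J.a = g I.a ∧ J.b = g I.b := by
  obtain ⟨⟨-, -, hord⟩, him⟩ := hg
  obtain ⟨J, hJ, hJI⟩ := him I hI
  have : J = ⟨g I.a, g I.b, fun h => I.ne (g.injective h)⟩ := by
    apply carrier_inj
    rw [hJI]
    ext z
    constructor
    · rintro ⟨w, hw, rfl⟩
      exact hord _ _ _ hw
    · intro hz
      obtain ⟨w, rfl⟩ := g.surjective z
      refine ⟨w, ?_, rfl⟩
      by_contra hw
      have hz' : sbtw (g I.a) (g w) (g I.b) := hz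
      by_cases h : w ∈ I.dual.carrier
      · have h' : sbtw (g I.b) (g w) (g I.a) := hord _ _ _ h
        rw [sbtw_iff I.a] at hz' h'
        grind
      · rw [mem_dual_carrier] at h
        have : w = I.a ∨ w = I.b := by
          by_contra! hc
          exact h ⟨hw, hc⟩
        rw [sbtw_iff I.a] at hz'
        rcases this with rfl | rfl <;> grind
  subst this
  exact ⟨_, hJ, rfl, rfl⟩

/-- If an automorphism fixes one endpoint of a leaf but moves the other endpoint `b`, then `b`,
`g b` and `g (g b)` are distinct, and three leaves share the fixed endpoint. -/
lemma fixed_of_fixed {L M : LamSys} (hq : M.QuiteFull) (hl : L.Loose)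
    (htr : ∀ z ∈ L.E, z ∉ M.E) {g : Equiv.Perm S1} (hg : L.InAut g) {I : GoodInt}
    (hI : I ∈ L.mem) (ha : g I.a = I.a) : g I.b = I.b := by
  by_contra hb
  obtain ⟨J, hJ, hJa, hJb⟩ := image_mem hg hI
  obtain ⟨K, hK, hKa, hKb⟩ := image_mem hg hJ
  rw [ha] at hJa
  rw [hJa, ha] at hKa
  rw [hJb] at hKb
  have mk : ∀ A ∈ L.mem, A.a = I.a → Chord L I.a 0 (crd I.a A.b) := by
    intro A hA h
    refine ⟨le_rfl, (crd_nonneg _ _).lt_of_ne fun e => A.ne ?_, (crd_lt_one _ _).le, A, hA, ?_, ?_⟩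
    · rw [h]
      exact crd_inj I.a (by rw [crd_self, e])
    · rw [h, pt_zero]
    · rw [pt_crd]
  have c1 := mk I hI rfl
  have c2 := mk J hJ hJa
  have c3 := mk K hK hKa
  rw [hJb] at c2
  rw [hKb] at c3
  have mono : ∀ x y, 0 < crd I.a x → crd I.a x < crd I.a y →
      0 < crd I.a (g x) → crd I.a (g x) < crd I.a (g y) := by
    intro x y h1 h2 h3
    have := hg.1.2.2 I.a x y ((sbtw_iff I.a _ _ _).2 (Or.inl (by rw [crd_self]; exact ⟨h1, h2⟩)))
    rw [ha, sbtw_iff I.a, crd_self] at this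
    have h4 := crd_nonneg I.a (g y)
    grind
  have hne : crd I.a (g I.b) ≠ crd I.a I.b := fun h => hb (crd_inj I.a h)
  rcases hne.lt_or_gt with h | h
  · exact no_three hq hl htr (mono _ _ c2.2.1 h c3.2.1) h c3 c2 c1
  · exact no_three hq hl htr h (mono _ _ c1.2.1 h c2.2.1) c1 c2 c3

lemma verts_dichotomy {L M : LamSys} (hq : M.QuiteFull) (hl : L.Loose)
    (htr : ∀ z ∈ L.E, z ∉ M.E) {g : Equiv.Perm S1} (hg : L.InAut g) {I : GoodInt}
    (hI : I ∈ L.mem) : I.verts ⊆ FixSet g ∨ I.verts ∩ FixSet g = ∅ := by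
  have h1 : g I.a = I.a → g I.b = I.b := fixed_of_fixed hq hl htr hg hI
  have h2 : g I.b = I.b → g I.a = I.a := fixed_of_fixed hq hl htr hg (L.dual_mem I hI)
  by_cases ha : g I.a = I.a
  · left
    rintro z (rfl | rfl)
    · exact ha
    · exact h1 ha
  · right
    rw [Set.eq_empty_iff_forall_notMem]
    rintro z ⟨rfl | rfl, hz⟩
    · exact ha hz
    · exact ha (h2 hz)

/-- for an automorphism of a pseudo-fibered pair, the vertex set
of every leaf is either contained in the fixed point set or disjoint from it. -/
theorem statement13 (L1 L2 : LamSys) (hpf : PseudoFibered L1 L2)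
    (g : Equiv.Perm S1) (hg1 : L1.InAut g) (hg2 : L2.InAut g)
    (I : GoodInt) (hI : I ∈ L1.mem ∪ L2.mem) :
    I.verts ⊆ FixSet g ∨ I.verts ∩ FixSet g = ∅ := by
  have htr : ∀ z ∈ L1.E, z ∉ L2.E := fun z h1 h2 => by
    have : z ∈ L1.E ∩ L2.E := ⟨h1, h2⟩
    rw [hpf.transverse] at this
    exact this
  rcases hI with hI | hI
  · exact verts_dichotomy hpf.qf2 hpf.loose1 htr hg1 hI
  · exact verts_dichotomy hpf.qf1 hpf.loose2 (fun z h2 h1 => htr z h1 h2) hg2 hI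

end Veering
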